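/- There exist positive constants c₁, c₂ and x₀ such that for all x ≥ x₀, c₁ √x ≤ ∫₀¹ |∑_{n ≤ x} τ(n) e(nα)| dα ≤ c₂ √x log x, where τ is the divisor function and e(α) = e^{2πiα}. -/

import Mathlib

open Finset intervalIntegral

/-!
Upper bound: Dirichlet's hyperbola method writes `S(α) = ∑_{n ≤ N} τ(n) e(nα)` as a combination of
at most `2√N` geometric sums over multiples of some `u ≤ √N`, each of `L¹` norm `O(log N)`.

Lower bound: the Fejér mean `S_F` of `S` of order `2N` is the convolution of `S` with a nonnegative
kernel that, summed over the Farey fractions of order `Q ≤ √N`, is `O(N)`; hence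
`N ∫ |S| ≫ ∑_{a/q} |S_F(a/q)| ≥ ∑_{q ≤ Q} |∑_a S_F(a/q)|`. The inner sum over `a` replaces `e(na/q)`
by the Ramanujan sum `c_q(n)`, and as `c_q` has mean `φ(q)` along the multiples of `u` when `q ∣ u`
and mean `0` otherwise, it is at least a constant times `N φ(q)/q`, up to `O(√N σ(q))`. For `Q` a
small multiple of `√N` the total is `≫ N Q`, so `∫ |S| ≫ Q ≫ √N`.
-/

open scoped FourierTransform ArithmeticFunction.Moebius ArithmeticFunction.sigma

section AdditiveCharacter

@[simp]
lemma fourierChar_intCast (n : ℤ) : 𝐞 (n : ℝ) = 1 := by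
  rw [Real.fourierChar_apply', mul_comm]
  exact Circle.exp_int_mul_two_pi n

lemma fourierChar_natCast_mul (n : ℕ) (t : ℝ) : 𝐞 (n * t) = 𝐞 t ^ n := by
  rw [← nsmul_eq_mul, AddChar.map_nsmul_eq_pow]

lemma norm_fourierChar_sub_one (t : ℝ) : ‖(𝐞 t : ℂ) - 1‖ = 2 * |Real.sin (Real.pi * t)| := by
  rw [Real.fourierChar_apply, mul_comm, Complex.norm_exp_I_mul_ofReal_sub_one, norm_mul,
    Real.norm_ofNat, Real.norm_eq_abs]
  ring_nf

lemma two_mul_abs_sub_round_le_abs_sin (t : ℝ) :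
    2 * |t - round t| ≤ |Real.sin (Real.pi * t)| := by
  have hsmall : |Real.pi * (t - round t)| ≤ Real.pi / 2 := by
    rw [abs_mul, abs_of_pos Real.pi_pos]
    nlinarith [abs_sub_round t, Real.pi_pos]
  have hshift : |Real.sin (Real.pi * (t - round t))| = |Real.sin (Real.pi * t)| := by
    rw [mul_sub, mul_comm Real.pi (round t : ℝ), Real.sin_sub_int_mul_pi, abs_mul, abs_zpow]
    simp
  calc 2 * |t - round t| = 2 / Real.pi * |Real.pi * (t - round t)| := by
        rw [abs_mul, abs_of_pos Real.pi_pos]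
        field_simp
    _ ≤ |Real.sin (Real.pi * t)| := hshift ▸ Real.mul_abs_le_abs_sin hsmall

lemma integral_fourierChar_intCast_mul (k : ℤ) :
    ∫ t in (0 : ℝ)..1, (𝐞 (k * t) : ℂ) = if k = 0 then 1 else 0 := by
  split_ifs with hk
  · simp [hk]
  · have hc : (2 * Real.pi * Complex.I * k : ℂ) ≠ 0 := by simp [hk, Real.pi_ne_zero]
    have hexp (t : ℝ) : (𝐞 (k * t) : ℂ) = Complex.exp (2 * Real.pi * Complex.I * k * t) := by
      rw [Real.fourierChar_apply]
      push_cast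
      ring_nf
    have hone : Complex.exp (2 * Real.pi * Complex.I * k) = 1 := by
      simpa using (hexp 1).symm
    simp_rw [hexp, integral_exp_mul_complex hc]
    simp [hone]

end AdditiveCharacter

section DirichletKernel

/-- The one-sided Dirichlet kernel `∑_{0 ≤ j < M} e(jt)`. Shifting the range of summation only
multiplies it by a unimodular factor, so its norm also governs sums over `1 ≤ j ≤ M`. -/
noncomputable def dirichletKernel (M : ℕ) (t : ℝ) : ℂ := ∑ j ∈ range M, (𝐞 (j * t) : ℂ)

@[fun_prop]
lemma continuous_dirichletKernel (M : ℕ) : Continuous (dirichletKernel M) := by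
  unfold dirichletKernel
  fun_prop

lemma periodic_dirichletKernel (M : ℕ) : Function.Periodic (dirichletKernel M) 1 := fun t => by
  have hint (j : ℕ) : 𝐞 (j : ℝ) = 1 := mod_cast fourierChar_intCast j
  simp only [dirichletKernel, mul_add, mul_one, AddChar.map_add_eq_mul, hint]

lemma norm_sum_Icc_fourierChar (M : ℕ) (t : ℝ) :
    ‖∑ j ∈ Icc 1 M, (𝐞 (j * t) : ℂ)‖ = ‖dirichletKernel M t‖ := by
  have hshift : ∑ j ∈ Icc 1 M, (𝐞 (j * t) : ℂ) = 𝐞 t * dirichletKernel M t := by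
    rw [← Finset.Ico_add_one_right_eq_Icc, Finset.sum_Ico_eq_sum_range, dirichletKernel,
      Finset.mul_sum, add_tsub_cancel_right]
    refine Finset.sum_congr rfl fun j _ => ?_
    rw [← Circle.coe_mul, ← AddChar.map_add_eq_mul]
    push_cast
    ring_nf
  rw [hshift, norm_mul, Circle.norm_coe, one_mul]

lemma norm_dirichletKernel_le_natCast (M : ℕ) (t : ℝ) : ‖dirichletKernel M t‖ ≤ M := by
  refine (norm_sum_le _ _).trans_eq ?_
  simp only [Circle.norm_coe, sum_const, card_range, nsmul_one]

lemma norm_dirichletKernel_mul_abs_sub_round_le_one (M : ℕ) (t : ℝ) :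
    ‖dirichletKernel M t‖ * (2 * |t - round t|) ≤ 1 := by
  have hgeom : dirichletKernel M t * (𝐞 t - 1) = 𝐞 (M * t) - 1 := by
    simp_rw [dirichletKernel, fourierChar_natCast_mul, Circle.coe_pow]
    exact geom_sum_mul _ _
  have hnorm :
      ‖dirichletKernel M t‖ * |Real.sin (Real.pi * t)| = |Real.sin (Real.pi * (M * t))| := by
    have := congrArg norm hgeom
    rw [norm_mul, norm_fourierChar_sub_one, norm_fourierChar_sub_one] at this
    linarith
  calc ‖dirichletKernel M t‖ * (2 * |t - round t|)
      ≤ ‖dirichletKernel M t‖ * |Real.sin (Real.pi * t)| := by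
        gcongr
        exact two_mul_abs_sub_round_le_abs_sin t
    _ ≤ 1 := hnorm ▸ Real.abs_sin_le_one _

lemma norm_dirichletKernel_le (M : ℕ) (t : ℝ) :
    ‖dirichletKernel M t‖ ≤ 2 * M / (1 + 2 * M * |t - round t|) := by
  rw [le_div_iff₀ (by positivity)]
  calc _ = ‖dirichletKernel M t‖
        + M * (‖dirichletKernel M t‖ * (2 * |t - round t|)) := by ring
    _ ≤ M + M * 1 := by
        gcongr
        · exact norm_dirichletKernel_le_natCast M t
        · exact norm_dirichletKernel_mul_abs_sub_round_le_one M t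
    _ = 2 * M := by ring

lemma abs_sub_round_of_abs_le_half {t : ℝ} (ht : |t| ≤ 1 / 2) : |t - round t| = |t| := by
  refine le_antisymm (by simpa using round_le t 0) ?_
  rcases eq_or_ne (round t) 0 with h | h
  · simp [h]
  · have hone : (1 : ℝ) ≤ |(round t : ℝ)| := mod_cast Int.one_le_abs h
    linarith [abs_sub_abs_le_abs_sub (round t : ℝ) t, abs_sub_comm t (round t : ℝ)]

lemma integral_two_mul_div_one_add_two_mul (M : ℕ) :
    ∫ t in (0 : ℝ)..1 / 2, 2 * M / (1 + 2 * M * t) = Real.log (M + 1) := by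
  simp only [div_eq_mul_inv (2 * (M : ℝ))]
  rw [intervalIntegral.integral_const_mul, mul_integral_comp_add_mul (f := fun x : ℝ => x⁻¹),
    integral_inv_of_pos (by simp) (by positivity)]
  ring_nf

lemma integral_norm_dirichletKernel_le (M : ℕ) :
    ∫ t in (0 : ℝ)..1, ‖dirichletKernel M t‖ ≤ 2 * Real.log (M + 1) := by
  have hint (f : ℝ → ℝ) (hf : Continuous f) (a b : ℝ) :
      IntervalIntegrable (fun t => ‖dirichletKernel M (f t)‖) MeasureTheory.volume a b :=
    Continuous.intervalIntegrable (by fun_prop) a b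
  have hhalf (f : ℝ → ℝ) (hf : Continuous f) (habs : ∀ t, |f t| = |t|) :
      ∫ t in (0 : ℝ)..1 / 2, ‖dirichletKernel M (f t)‖ ≤ Real.log (M + 1) := by
    rw [← integral_two_mul_div_one_add_two_mul]
    refine integral_mono_on (by norm_num) (hint f hf _ _) ?_ fun t ht => ?_
    · refine ContinuousOn.intervalIntegrable fun t ht => ContinuousAt.continuousWithinAt ?_
      rw [Set.uIcc_of_le (by norm_num)] at ht
      have := ht.1
      have : 1 + 2 * M * t ≠ 0 := by positivity
      fun_prop (disch := assumption)
    · have ht' : |f t| = t := (habs t).trans (abs_of_nonneg ht.1)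
      have := norm_dirichletKernel_le M (f t)
      rwa [abs_sub_round_of_abs_le_half (ht'.trans_le ht.2), ht'] at this
  have hper : Function.Periodic (fun t => ‖dirichletKernel M t‖) 1 :=
    (periodic_dirichletKernel M).comp norm
  calc ∫ t in (0 : ℝ)..1, ‖dirichletKernel M t‖
      = ∫ t in (-(1 / 2) : ℝ)..1 / 2, ‖dirichletKernel M t‖ := by
        convert hper.intervalIntegral_add_eq 0 (-(1 / 2)) using 2 <;> norm_num
    _ = (∫ t in (0 : ℝ)..1 / 2, ‖dirichletKernel M (-t)‖)
        + ∫ t in (0 : ℝ)..1 / 2, ‖dirichletKernel M t‖ := by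
        rw [integral_comp_neg fun t => ‖dirichletKernel M t‖, neg_zero]
        exact (integral_add_adjacent_intervals (hint id continuous_id _ _)
          (hint id continuous_id _ _)).symm
    _ ≤ Real.log (M + 1) + Real.log (M + 1) :=
        add_le_add (hhalf _ continuous_neg abs_neg) (hhalf _ continuous_id fun _ => rfl)
    _ = 2 * Real.log (M + 1) := by ring

lemma intervalIntegral_comp_natCast_mul_of_periodic {f : ℝ → ℝ} {T : ℝ}
    (hf : Function.Periodic f T) (hf' : Continuous f) {u : ℕ} (hu : u ≠ 0) :
    ∫ t in (0 : ℝ)..T, f (u * t) = ∫ t in (0 : ℝ)..T, f t := by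
  have hperiods := hf.intervalIntegral_add_zsmul_eq u 0 fun a b => hf'.intervalIntegrable a b
  simp only [zero_add, zsmul_eq_mul, Int.cast_natCast] at hperiods
  rw [integral_comp_mul_left f (Nat.cast_ne_zero.2 hu), mul_zero, hperiods, smul_eq_mul,
    inv_mul_cancel_left₀ (Nat.cast_ne_zero.2 hu)]

lemma integral_norm_dirichletKernel_natCast_mul_le (M : ℕ) {u : ℕ} (hu : u ≠ 0) :
    ∫ t in (0 : ℝ)..1, ‖dirichletKernel M (u * t)‖ ≤ 2 * Real.log (M + 1) :=
  (intervalIntegral_comp_natCast_mul_of_periodic ((periodic_dirichletKernel M).comp norm)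
    (by fun_prop) hu).trans_le (integral_norm_dirichletKernel_le M)

end DirichletKernel

section Hyperbola

variable {R : Type*} [Ring R]

lemma sum_card_divisors_mul_eq_sum_prod (N : ℕ) (f : ℕ → R) :
    ∑ n ∈ Icc 1 N, (n.divisors.card : R) * f n =
      ∑ p ∈ Icc 1 N ×ˢ Icc 1 N with p.1 * p.2 ≤ N, f (p.1 * p.2) := by
  have hmaps : ∀ p ∈ {p ∈ Icc 1 N ×ˢ Icc 1 N | p.1 * p.2 ≤ N}, p.1 * p.2 ∈ Icc 1 N := by
    intro p hp
    simp only [mem_filter, mem_product, mem_Icc] at hp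
    exact mem_Icc.2 ⟨Nat.mul_pos hp.1.1.1 hp.1.2.1, hp.2⟩
  rw [← Finset.sum_fiberwise_of_maps_to hmaps]
  refine Finset.sum_congr rfl fun n hn => ?_
  obtain ⟨hn1, hnN⟩ := mem_Icc.1 hn
  have hfiber : {p ∈ {p ∈ Icc 1 N ×ˢ Icc 1 N | p.1 * p.2 ≤ N} | p.1 * p.2 = n} =
      n.divisorsAntidiagonal := by
    rw [Nat.divisorsAntidiagonal_eq_prod_filter_of_le (by omega) hnN, filter_filter]
    refine filter_congr fun p _ => ?_
    omega
  rw [hfiber, Finset.sum_congr rfl fun p hp => by rw [(Nat.mem_divisorsAntidiagonal.1 hp).1],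
    sum_const, nsmul_eq_mul, ← Nat.map_div_right_divisors, card_map]

lemma le_sqrt_or_le_sqrt_of_mul_le {N u m : ℕ} (h : u * m ≤ N) : u ≤ N.sqrt ∨ m ≤ N.sqrt := by
  by_contra! hlt
  exact (Nat.lt_of_lt_of_le (Nat.lt_succ_sqrt N) (Nat.mul_le_mul hlt.1 hlt.2)).not_ge h

lemma sum_card_divisors_mul_eq_hyperbola (N : ℕ) (f : ℕ → R) :
    ∑ n ∈ Icc 1 N, (n.divisors.card : R) * f n = ∑ u ∈ Icc 1 N.sqrt,
      (2 * ∑ m ∈ Icc 1 (N / u), f (u * m) - ∑ m ∈ Icc 1 N.sqrt, f (u * m)) := by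
  set P := {p ∈ Icc 1 N ×ˢ Icc 1 N | p.1 * p.2 ≤ N} with hP
  have hsqrt := Nat.sqrt_le_self N
  have hunion : {p ∈ P | p.1 ≤ N.sqrt} ∪ {p ∈ P | p.2 ≤ N.sqrt} = P := by
    rw [← filter_or,
      filter_true_of_mem fun p hp => le_sqrt_or_le_sqrt_of_mul_le (mem_filter.1 hp).2]
  have hinter : ∑ p ∈ {p ∈ P | p.1 ≤ N.sqrt} ∩ {p ∈ P | p.2 ≤ N.sqrt}, f (p.1 * p.2) =
      ∑ u ∈ Icc 1 N.sqrt, ∑ m ∈ Icc 1 N.sqrt, f (u * m) := by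
    refine sum_finset_product _ _ _ (fun p => ?_) (f := fun p => f (p.1 * p.2))
    have (h1 : p.1 ≤ N.sqrt) (h2 : p.2 ≤ N.sqrt) : p.1 * p.2 ≤ N :=
      (Nat.mul_le_mul h1 h2).trans (Nat.sqrt_le N)
    simp only [hP, mem_inter, mem_filter, mem_product, mem_Icc]
    grind
  have hleft : ∑ p ∈ P with p.1 ≤ N.sqrt, f (p.1 * p.2) =
      ∑ u ∈ Icc 1 N.sqrt, ∑ m ∈ Icc 1 (N / u), f (u * m) := by
    refine sum_finset_product _ _ _ (fun p => ?_) (f := fun p => f (p.1 * p.2))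
    simp only [hP, mem_filter, mem_product, mem_Icc]
    constructor
    · rintro ⟨⟨⟨⟨hu, -⟩, hm, -⟩, hle⟩, hus⟩
      exact ⟨⟨hu, hus⟩, hm, (Nat.le_div_iff_mul_le hu).2 (mul_comm p.1 p.2 ▸ hle)⟩
    · rintro ⟨⟨hu, hus⟩, hm, hle⟩
      have hle' := (Nat.le_div_iff_mul_le hu).1 hle
      exact ⟨⟨⟨⟨hu, hus.trans hsqrt⟩, hm, hle.trans (Nat.div_le_self _ _)⟩,
        mul_comm p.1 p.2 ▸ hle'⟩, hus⟩
  have hright : ∑ p ∈ P with p.2 ≤ N.sqrt, f (p.1 * p.2) =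
      ∑ p ∈ P with p.1 ≤ N.sqrt, f (p.1 * p.2) :=
    sum_equiv (Equiv.prodComm ℕ ℕ) (by simp [hP, mul_comm, and_comm]) fun p _ => by simp [mul_comm]
  have hsum := sum_union_inter (s₁ := {p ∈ P | p.1 ≤ N.sqrt}) (s₂ := {p ∈ P | p.2 ≤ N.sqrt})
    (f := fun p => f (p.1 * p.2))
  rw [hunion, hinter, hright, hleft] at hsum
  rw [sum_card_divisors_mul_eq_sum_prod, eq_sub_of_add_eq hsum, sum_sub_distrib, ← mul_sum, two_mul]

end Hyperbola

section UpperBound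

/-- The exponential sum `S(α) = ∑_{n ≤ N} τ(n) e(nα)` over the divisor function. -/
noncomputable def divisorExpSum (N : ℕ) (α : ℝ) : ℂ :=
  ∑ n ∈ Icc 1 N, (n.divisors.card : ℂ) * 𝐞 (n * α)

@[fun_prop]
lemma continuous_divisorExpSum (N : ℕ) : Continuous (divisorExpSum N) := by
  unfold divisorExpSum
  fun_prop

lemma norm_divisorExpSum_le (N : ℕ) (α : ℝ) :
    ‖divisorExpSum N α‖ ≤ ∑ u ∈ Icc 1 N.sqrt,
      (2 * ‖dirichletKernel (N / u) (u * α)‖ + ‖dirichletKernel N.sqrt (u * α)‖) := by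
  have hswap (u m : ℕ) : 𝐞 ((u * m : ℕ) * α) = 𝐞 (m * (u * α)) := by
    push_cast
    ring_nf
  rw [divisorExpSum, sum_card_divisors_mul_eq_hyperbola]
  refine (norm_sum_le _ _).trans (Finset.sum_le_sum fun u _ => (norm_sub_le _ _).trans_eq ?_)
  simp only [hswap, norm_mul, norm_sum_Icc_fourierChar, Complex.norm_ofNat]

lemma integral_norm_divisorExpSum_le (N : ℕ) :
    ∫ α in (0 : ℝ)..1, ‖divisorExpSum N α‖ ≤ 6 * N.sqrt * Real.log (N + 1) := by
  have hint (M u : ℕ) : IntervalIntegrable (fun α : ℝ => ‖dirichletKernel M (u * α)‖)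
      MeasureTheory.volume 0 1 := Continuous.intervalIntegrable (by fun_prop) _ _
  have hlog {M : ℕ} (hM : M ≤ N) {u : ℕ} (hu : u ≠ 0) :
      ∫ α in (0 : ℝ)..1, ‖dirichletKernel M (u * α)‖ ≤ 2 * Real.log (N + 1) :=
    (integral_norm_dirichletKernel_natCast_mul_le M hu).trans (by gcongr)
  calc ∫ α in (0 : ℝ)..1, ‖divisorExpSum N α‖
      ≤ ∫ α in (0 : ℝ)..1, ∑ u ∈ Icc 1 N.sqrt,
        (2 * ‖dirichletKernel (N / u) (u * α)‖ + ‖dirichletKernel N.sqrt (u * α)‖) :=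
        integral_mono zero_le_one (Continuous.intervalIntegrable (by fun_prop) _ _)
          (Continuous.intervalIntegrable (by fun_prop) _ _) (norm_divisorExpSum_le N)
    _ = ∑ u ∈ Icc 1 N.sqrt, (2 * (∫ α in (0 : ℝ)..1, ‖dirichletKernel (N / u) (u * α)‖)
        + ∫ α in (0 : ℝ)..1, ‖dirichletKernel N.sqrt (u * α)‖) := by
        rw [intervalIntegral.integral_finsetSum
          fun u _ => ((hint _ u).const_mul 2).add (hint _ u)]
        refine Finset.sum_congr rfl fun u _ => ?_
        rw [intervalIntegral.integral_add ((hint _ u).const_mul 2) (hint _ u),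
          intervalIntegral.integral_const_mul]
    _ ≤ ∑ u ∈ Icc 1 N.sqrt, 6 * Real.log (N + 1) := by
        refine Finset.sum_le_sum fun u hu => ?_
        have hu0 : u ≠ 0 := Nat.one_le_iff_ne_zero.1 (mem_Icc.1 hu).1
        linarith [hlog (Nat.div_le_self N u) hu0, hlog (Nat.sqrt_le_self N) hu0]
    _ = 6 * N.sqrt * Real.log (N + 1) := by
        rw [sum_const, Nat.card_Icc, nsmul_eq_mul, Nat.add_sub_cancel]
        ring

end UpperBound

section FejerKernel

/-- The Fejér kernel of order `M`, written as `|D_M(t)|² / M` for the one-sided Dirichlet kernel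
`D_M`. -/
noncomputable def fejerKernel (M : ℕ) (t : ℝ) : ℝ := ‖dirichletKernel M t‖ ^ 2 / M

/-- The Fourier coefficient `max (1 - n / M) 0` of the Fejér kernel of order `M` at the frequency
`n`; the truncated subtraction takes the positive part. -/
noncomputable def fejerWeight (M n : ℕ) : ℝ := (M - n : ℕ) / M

@[fun_prop]
lemma continuous_fejerKernel (M : ℕ) : Continuous (fejerKernel M) := by
  unfold fejerKernel
  fun_prop

lemma fejerKernel_nonneg (M : ℕ) (t : ℝ) : 0 ≤ fejerKernel M t := by
  unfold fejerKernel
  positivity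

lemma fejerWeight_nonneg (M n : ℕ) : 0 ≤ fejerWeight M n := by
  unfold fejerWeight
  positivity

lemma antitone_fejerWeight (M : ℕ) : Antitone (fejerWeight M) := fun m n h => by
  unfold fejerWeight
  gcongr

lemma fejerWeight_le_one (M n : ℕ) : fejerWeight M n ≤ 1 :=
  div_le_one_of_le₀ (mod_cast Nat.sub_le M n) M.cast_nonneg

lemma one_half_le_fejerWeight {N n : ℕ} (hN : 0 < N) (hn : n ≤ N) :
    1 / 2 ≤ fejerWeight (2 * N) n := by
  rw [fejerWeight, div_le_div_iff₀ two_pos (by positivity)]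
  exact mod_cast (by lia : 1 * (2 * N) ≤ (2 * N - n) * 2)

lemma conj_fourierChar (t : ℝ) : starRingEnd ℂ (𝐞 t) = 𝐞 (-t) := by
  rw [AddChar.map_neg_eq_inv, Circle.coe_inv_eq_conj]

lemma fejerKernel_eq_sum (M : ℕ) (t : ℝ) :
    (fejerKernel M t : ℂ) =
      1 / M * ∑ j ∈ range M, ∑ l ∈ range M, (𝐞 (((j - l : ℤ) : ℝ) * t) : ℂ) := by
  have hsq : (‖dirichletKernel M t‖ : ℂ) ^ 2 =
      ∑ j ∈ range M, ∑ l ∈ range M, (𝐞 (((j - l : ℤ) : ℝ) * t) : ℂ) := by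
    rw [← Complex.mul_conj', dirichletKernel, map_sum, Finset.sum_mul_sum]
    refine Finset.sum_congr rfl fun j _ => Finset.sum_congr rfl fun l _ => ?_
    rw [conj_fourierChar, ← Circle.coe_mul, ← AddChar.map_add_eq_mul]
    push_cast
    ring_nf
  rw [← hsq, fejerKernel]
  push_cast
  ring

lemma integral_fourierChar_mul_fejerKernel {M n : ℕ} (hn : n ≤ M) (α : ℝ) :
    ∫ t in (0 : ℝ)..1, (𝐞 (n * t) : ℂ) * fejerKernel M (α - t) =
      fejerWeight M n * 𝐞 (n * α) := by
  have hexpand (t : ℝ) : (𝐞 (n * t) : ℂ) * fejerKernel M (α - t) =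
      1 / M * ∑ l ∈ range M, ∑ j ∈ range M,
        (𝐞 (((j - l : ℤ) : ℝ) * α) : ℂ) * 𝐞 (((n - j + l : ℤ) : ℝ) * t) := by
    rw [fejerKernel_eq_sum, mul_left_comm, Finset.sum_comm, Finset.mul_sum]
    simp only [Finset.mul_sum, ← Circle.coe_mul, ← AddChar.map_add_eq_mul]
    refine Finset.sum_congr rfl fun l _ => Finset.sum_congr rfl fun j _ => ?_
    congr 3
    push_cast
    ring
  have horth (l : ℕ) : ∫ t in (0 : ℝ)..1, ∑ j ∈ range M,
      (𝐞 (((j - l : ℤ) : ℝ) * α) : ℂ) * 𝐞 (((n - j + l : ℤ) : ℝ) * t) =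
      if l < M - n then (𝐞 (n * α) : ℂ) else 0 := by
    rw [intervalIntegral.integral_finsetSum
      fun j _ => Continuous.intervalIntegrable (by fun_prop) _ _]
    have hterm (j : ℕ) : (𝐞 (((j - l : ℤ) : ℝ) * α) : ℂ) * (if (n - j + l : ℤ) = 0 then 1 else 0) =
        if j = n + l then (𝐞 (n * α) : ℂ) else 0 := by
      split_ifs with h₁ h₂ h₂
      · simp [h₂]
      all_goals first | omega | simp
    simp only [intervalIntegral.integral_const_mul, integral_fourierChar_intCast_mul, hterm,
      Finset.sum_ite_eq', mem_range]
    exact if_congr (by omega) rfl rfl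
  simp only [hexpand, intervalIntegral.integral_const_mul]
  rw [intervalIntegral.integral_finsetSum
    fun l _ => Continuous.intervalIntegrable (by fun_prop) _ _]
  simp only [horth]
  have hcard : #{l ∈ range M | l < M - n} = M - n := by
    have hrange : {l ∈ range M | l < M - n} = range (M - n) := by
      ext l
      simp only [mem_filter, mem_range]
      omega
    rw [hrange, card_range]
  rw [← Finset.sum_filter, Finset.sum_const, hcard, nsmul_eq_mul, fejerWeight]
  push_cast
  ring

lemma fejerKernel_le (M : ℕ) (t : ℝ) :
    fejerKernel M t ≤ M * (8 / (1 + (⌊M * (t - round t)⌋ : ℝ) ^ 2)) := by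
  rcases M.eq_zero_or_pos with rfl | hM
  · simp [fejerKernel]
  set y := |M * (t - round t)| with hy
  set k : ℝ := ((⌊M * (t - round t)⌋ : ℤ) : ℝ)
  have hy_eq : M * |t - round t| = y := by rw [hy, abs_mul, Nat.abs_cast]
  have hky : |k| ≤ y + 1 := by
    have := Int.floor_le (M * (t - round t))
    have := Int.lt_floor_add_one (M * (t - round t))
    rw [hy, abs_le]
    constructor <;> cases abs_cases (M * (t - round t)) <;> linarith
  have hk_sq : k ^ 2 ≤ (y + 1) ^ 2 := sq_le_sq.2 (hky.trans (le_abs_self _))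
  have hy0 : 0 ≤ y := abs_nonneg _
  calc fejerKernel M t ≤ (2 * M / (1 + 2 * y)) ^ 2 / M := by
        rw [fejerKernel, ← hy_eq, ← mul_assoc]
        gcongr
        exact norm_dirichletKernel_le M t
    _ = M * (4 / (1 + 2 * y) ^ 2) := by field_simp; ring
    _ ≤ M * (8 / (1 + k ^ 2)) := by
        gcongr M * ?_
        rw [div_le_div_iff₀ (by positivity) (by positivity)]
        nlinarith

end FejerKernel

section LargeSieve

/-- The constant `∑_{k ∈ ℤ} 8 / (1 + k²)` of the `L¹` large sieve inequality, obtained by summing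
the bound `fejerKernel_le` over all integer values of the floor. -/
noncomputable def largeSieveConst : ℝ := ∑' k : ℤ, 8 / (1 + (k : ℝ) ^ 2)

lemma summable_div_one_add_int_sq (c : ℝ) : Summable fun k : ℤ => c / (1 + (k : ℝ) ^ 2) := by
  have hsq := (Real.summable_one_div_int_pow (p := 2)).2 one_lt_two
  refine Summable.of_norm_bounded_eventually (hsq.mul_left |c|) ?_
  filter_upwards [(Set.finite_singleton (0 : ℤ)).compl_mem_cofinite] with k hk
  have hk' : (k : ℝ) ≠ 0 := by simpa using hk
  rw [norm_div, Real.norm_eq_abs, Real.norm_of_nonneg (by positivity), mul_one_div]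
  gcongr
  linarith

lemma largeSieveConst_pos : 0 < largeSieveConst :=
  (summable_div_one_add_int_sq 8).tsum_pos (fun k => by positivity) 0 (by norm_num)

variable {ι : Type*} {M : ℕ} {A : Finset ι} {a : ι → ℝ}

lemma sum_fejerKernel_le (hM : 0 < M)
    (ha : (A : Set ι).Pairwise fun i j => ∀ k : ℤ, 1 / (M : ℝ) ≤ |a i - a j - k|) (t : ℝ) :
    ∑ i ∈ A, fejerKernel M (a i - t) ≤ M * largeSieveConst := by
  set r : ι → ℝ := fun i => a i - t - round (a i - t) with hr
  have hM' : (0 : ℝ) < M := mod_cast hM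
  have hinj : Set.InjOn (fun i => ⌊M * r i⌋) A := fun i hi j hj hij => by
    by_contra hne
    have hsep := ha hi hj hne (round (a i - t) - round (a j - t))
    have hclose := Int.abs_sub_lt_one_of_floor_eq_floor hij
    rw [← mul_sub, abs_mul, abs_of_pos hM', ← lt_div_iff₀' hM'] at hclose
    refine (hsep.trans_lt (lt_of_eq_of_lt ?_ hclose)).false
    push_cast [hr]
    ring_nf
  calc ∑ i ∈ A, fejerKernel M (a i - t)
      ≤ ∑ i ∈ A, M * (8 / (1 + (⌊M * r i⌋ : ℝ) ^ 2)) :=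
        Finset.sum_le_sum fun i _ => fejerKernel_le M _
    _ = M * ∑ k ∈ A.image fun i => ⌊M * r i⌋, 8 / (1 + (k : ℝ) ^ 2) := by
        rw [Finset.sum_image hinj, Finset.mul_sum]
    _ ≤ M * largeSieveConst := by
        gcongr
        exact (summable_div_one_add_int_sq 8).sum_le_tsum _ fun k _ => by positivity

lemma sum_norm_fejerMean_le (hM : 0 < M)
    (ha : (A : Set ι).Pairwise fun i j => ∀ k : ℤ, 1 / (M : ℝ) ≤ |a i - a j - k|)
    {s : Finset ℕ} (hs : ∀ n ∈ s, n ≤ M) (c : ℕ → ℂ) :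
    ∑ i ∈ A, ‖∑ n ∈ s, c n * (fejerWeight M n * 𝐞 (n * a i))‖ ≤
      M * largeSieveConst * ∫ t in (0 : ℝ)..1, ‖∑ n ∈ s, c n * 𝐞 (n * t)‖ := by
  have hmean (α : ℝ) : ∑ n ∈ s, c n * (fejerWeight M n * 𝐞 (n * α)) =
      ∫ t in (0 : ℝ)..1, (∑ n ∈ s, c n * 𝐞 (n * t)) * fejerKernel M (α - t) := by
    simp only [Finset.sum_mul, mul_assoc]
    rw [intervalIntegral.integral_finsetSum
      fun n _ => Continuous.intervalIntegrable (by fun_prop) _ _]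
    refine Finset.sum_congr rfl fun n hn => ?_
    rw [intervalIntegral.integral_const_mul, integral_fourierChar_mul_fejerKernel (hs n hn)]
  calc ∑ i ∈ A, ‖∑ n ∈ s, c n * (fejerWeight M n * 𝐞 (n * a i))‖
      ≤ ∑ i ∈ A, ∫ t in (0 : ℝ)..1, ‖∑ n ∈ s, c n * 𝐞 (n * t)‖ * fejerKernel M (a i - t) := by
        refine Finset.sum_le_sum fun i _ => ?_
        rw [hmean]
        refine (norm_integral_le_integral_norm zero_le_one).trans_eq ?_
        simp only [norm_mul, Complex.norm_real, Real.norm_of_nonneg (fejerKernel_nonneg _ _)]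
    _ = ∫ t in (0 : ℝ)..1, ‖∑ n ∈ s, c n * 𝐞 (n * t)‖ * ∑ i ∈ A, fejerKernel M (a i - t) := by
        simp only [Finset.mul_sum]
        rw [intervalIntegral.integral_finsetSum
          fun i _ => Continuous.intervalIntegrable (by fun_prop) _ _]
    _ ≤ ∫ t in (0 : ℝ)..1, ‖∑ n ∈ s, c n * 𝐞 (n * t)‖ * (M * largeSieveConst) := by
        refine integral_mono zero_le_one (Continuous.intervalIntegrable (by fun_prop) _ _)
          (Continuous.intervalIntegrable (by fun_prop) _ _) fun t => ?_
        gcongr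
        exact sum_fejerKernel_le hM ha t
    _ = M * largeSieveConst * ∫ t in (0 : ℝ)..1, ‖∑ n ∈ s, c n * 𝐞 (n * t)‖ := by
        rw [intervalIntegral.integral_mul_const, mul_comm]

end LargeSieve

section RamanujanSum

lemma sum_range_div_eq_sum_divisors {R : Type*} [AddCommMonoid R] {q : ℕ} (hq : 0 < q)
    (F : ℝ → R) :
    ∑ a ∈ range q, F (a / q) = ∑ d ∈ q.divisors, ∑ b ∈ range d with b.Coprime d, F (b / d) := by
  rw [Finset.sum_sigma']
  refine sum_bij' (fun a _ => ⟨q / a.gcd q, a / a.gcd q⟩) (fun p _ => p.2 * (q / p.1))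
    (fun a ha => ?_) (fun p hp => ?_) (fun a _ => ?_) (fun p hp => ?_) (fun a _ => ?_)
  · have hg : 0 < a.gcd q := Nat.gcd_pos_of_pos_right a hq
    simp only [mem_sigma, Nat.mem_divisors, mem_filter, mem_range]
    exact ⟨⟨Nat.div_dvd_of_dvd (Nat.gcd_dvd_right a q), hq.ne'⟩,
      Nat.div_lt_div_of_lt_of_dvd (Nat.gcd_dvd_right a q) (mem_range.1 ha),
      Nat.coprime_div_gcd_div_gcd hg⟩
  · obtain ⟨d, b⟩ := p
    simp only [mem_sigma, Nat.mem_divisors, mem_filter, mem_range] at hp ⊢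
    obtain ⟨⟨⟨k, rfl⟩, -⟩, hbd, -⟩ := hp
    rw [Nat.mul_div_cancel_left k (by lia)]
    exact Nat.mul_lt_mul_of_pos_right hbd (Nat.pos_of_mul_pos_left hq)
  · simp only [Nat.div_div_self (Nat.gcd_dvd_right a q) hq.ne']
    exact Nat.div_mul_cancel (Nat.gcd_dvd_left a q)
  · obtain ⟨d, b⟩ := p
    simp only [mem_sigma, Nat.mem_divisors, mem_filter, mem_range] at hp
    obtain ⟨⟨⟨k, rfl⟩, -⟩, hbd, hcop⟩ := hp
    have hk : 0 < k := Nat.pos_of_mul_pos_left hq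
    have hd : 0 < d := Nat.zero_lt_of_lt hbd
    simp only [Nat.mul_div_cancel_left k hd, Nat.gcd_mul_right, hcop.gcd_eq_one,
      one_mul, Nat.mul_div_cancel _ hk]
  · have hg : ((a.gcd q : ℕ) : ℝ) ≠ 0 := mod_cast (Nat.gcd_pos_of_pos_right a hq).ne'
    rw [Nat.cast_div (Nat.gcd_dvd_left a q) hg, Nat.cast_div (Nat.gcd_dvd_right a q) hg,
      div_div_div_cancel_right₀ hg]

lemma fourierChar_eq_one_iff {t : ℝ} : 𝐞 t = 1 ↔ ∃ k : ℤ, t = k := by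
  rw [Real.fourierChar_apply', Circle.exp_eq_one]
  simp only [mul_comm (2 * Real.pi), mul_left_inj' Real.two_pi_pos.ne']

lemma fourierChar_natCast_div_eq_one_iff {d : ℕ} (hd : 0 < d) (n : ℕ) :
    𝐞 ((n : ℝ) / d) = 1 ↔ d ∣ n := by
  have hd' : (d : ℝ) ≠ 0 := mod_cast hd.ne'
  rw [fourierChar_eq_one_iff, ← Int.natCast_dvd_natCast]
  simp only [div_eq_iff hd', mul_comm _ (d : ℝ)]
  exact exists_congr fun k => by norm_cast

lemma sum_range_fourierChar_mul_div {d : ℕ} (hd : 0 < d) (n : ℕ) :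
    ∑ b ∈ range d, (𝐞 (n * (b / d)) : ℂ) = if d ∣ n then (d : ℂ) else 0 := by
  have hpow (b : ℕ) : (𝐞 (n * (b / d)) : ℂ) = (𝐞 ((n : ℝ) / d) : ℂ) ^ b := by
    rw [← Circle.coe_pow, ← fourierChar_natCast_mul]
    congr 2
    ring
  simp only [hpow]
  split_ifs with h
  · rw [(fourierChar_natCast_div_eq_one_iff hd n).2 h]
    simp only [Circle.coe_one, one_pow, sum_const, card_range, nsmul_eq_mul, mul_one]
  · have hne : (𝐞 ((n : ℝ) / d) : ℂ) ≠ 1 := by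
      rwa [Ne, Circle.coe_eq_one, fourierChar_natCast_div_eq_one_iff hd]
    have hone : 𝐞 ((d : ℝ) * (n / d)) = 1 := by
      rw [mul_div_cancel₀ _ (by positivity)]
      exact mod_cast fourierChar_intCast n
    rw [geom_sum_eq hne, ← Circle.coe_pow, ← fourierChar_natCast_mul, hone, Circle.coe_one,
      sub_self, zero_div]

/-- The Ramanujan sum `c_q(n)`, encoded by Kluyver's formula `∑_{d ∣ gcd (q, n)} μ(q / d) d` so that
it is an integer; `sum_fourierChar_coprime` is the usual definition. -/
def ramanujanSum (q n : ℕ) : ℤ :=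
  ∑ x ∈ q.divisorsAntidiagonal, μ x.1 * if x.2 ∣ n then (x.2 : ℤ) else 0

lemma sum_fourierChar_coprime {q : ℕ} (hq : 0 < q) (n : ℕ) :
    ∑ a ∈ range q with a.Coprime q, (𝐞 (n * (a / q)) : ℂ) = ramanujanSum q n := by
  have hinv := (ArithmeticFunction.sum_eq_iff_sum_mul_moebius_eq
    (f := fun d => ∑ b ∈ range d with b.Coprime d, (𝐞 (n * (b / d)) : ℂ))
    (g := fun d => if d ∣ n then (d : ℂ) else 0)).1 (fun d hd => by
      rw [← sum_range_fourierChar_mul_div hd]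
      exact (sum_range_div_eq_sum_divisors hd fun t => (𝐞 (n * t) : ℂ)).symm) q hq
  rw [← hinv, ramanujanSum]
  push_cast
  rfl

lemma sum_divisors_ite_dvd_totient {n : ℕ} (hn : 0 < n) (u : ℕ) :
    ∑ d ∈ n.divisors, (if d ∣ u then d.totient else 0) = u.gcd n := by
  rw [← Finset.sum_filter, ← Nat.sum_totient (u.gcd n)]
  refine Finset.sum_congr ?_ fun _ _ => rfl
  ext d
  have hg : u.gcd n ≠ 0 := (Nat.gcd_pos_of_pos_right u hn).ne'
  simp only [mem_filter, Nat.mem_divisors, Nat.dvd_gcd_iff]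
  have := hn.ne'
  tauto

lemma sum_moebius_mul_gcd {q : ℕ} (hq : 0 < q) (u : ℕ) :
    ∑ x ∈ q.divisorsAntidiagonal, μ x.1 * (u.gcd x.2 : ℤ) = if q ∣ u then (q.totient : ℤ) else 0 :=
  (ArithmeticFunction.sum_eq_iff_sum_mul_moebius_eq (R := ℤ)
    (f := fun d => if d ∣ u then (d.totient : ℤ) else 0) (g := fun d => (u.gcd d : ℤ))).1
    (fun _ hd => mod_cast sum_divisors_ite_dvd_totient hd u) q hq

lemma abs_sum_ite_dvd_mul_sub_le {d : ℕ} (hd : 0 < d) (u Y : ℕ) :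
    |∑ m ∈ Icc 1 Y, (if d ∣ u * m then (d : ℤ) else 0) - Y * u.gcd d| ≤ d := by
  obtain ⟨u', e, hcop, hu, he⟩ := Nat.exists_coprime u d
  set g := u.gcd d
  have hg : 0 < g := Nat.gcd_pos_of_pos_right u hd
  have hdvd (m : ℕ) : d ∣ u * m ↔ e ∣ m := by
    rw [hu, he, mul_right_comm, Nat.mul_dvd_mul_iff_right hg, hcop.symm.dvd_mul_left]
  have hcount : ∑ m ∈ Icc 1 Y, (if d ∣ u * m then (d : ℤ) else 0) = Y / e * d := by
    simp only [hdvd]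
    rw [← Finset.sum_filter, Finset.sum_const, nsmul_eq_mul,
      show Icc 1 Y = Ioc 0 Y from rfl, Nat.Ioc_filter_dvd_card_eq_div]
    push_cast
    rfl
  have he0 : (0 : ℤ) < e := by
    rcases e.eq_zero_or_pos with rfl | h
    · simp [he] at hd
    · exact_mod_cast h
  have hmod : (Y / e * d - Y * g : ℤ) = -(g * (Y % e)) := by
    rw [Int.emod_def, he]
    push_cast
    ring
  rw [hcount, hmod, abs_neg, abs_mul, Nat.abs_cast, abs_of_nonneg (Int.emod_nonneg _ he0.ne')]
  calc (g * (Y % e) : ℤ) ≤ g * e := by gcongr; exact (Int.emod_lt_of_pos _ he0).le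
    _ = d := by rw [he]; push_cast; ring

lemma abs_sum_ramanujanSum_sub_le {q : ℕ} (hq : 0 < q) (u Y : ℕ) :
    |∑ m ∈ Icc 1 Y, ramanujanSum q (u * m) - Y * (if q ∣ u then (q.totient : ℤ) else 0)| ≤
      σ 1 q := by
  have hexpand : ∑ m ∈ Icc 1 Y, ramanujanSum q (u * m) -
      Y * (if q ∣ u then (q.totient : ℤ) else 0) = ∑ x ∈ q.divisorsAntidiagonal,
        μ x.1 * (∑ m ∈ Icc 1 Y, (if x.2 ∣ u * m then (x.2 : ℤ) else 0) - Y * u.gcd x.2) := by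
    simp only [ramanujanSum, mul_sub, Finset.sum_sub_distrib, Finset.mul_sum,
      ← sum_moebius_mul_gcd hq u]
    rw [Finset.sum_comm]
    simp only [mul_left_comm]
  rw [hexpand, ArithmeticFunction.sigma_one_apply, Nat.cast_sum,
    ← Nat.sum_divisorsAntidiagonal' (f := fun _ d => (d : ℤ))]
  refine (Finset.abs_sum_le_sum_abs _ _).trans (Finset.sum_le_sum fun x hx => ?_)
  have hx2 : 0 < x.2 := Nat.pos_of_ne_zero (Nat.ne_zero_of_mem_divisorsAntidiagonal hx).2
  rw [abs_mul]
  exact (mul_le_of_le_one_left (abs_nonneg _) ArithmeticFunction.abs_moebius_le_one).trans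
    (abs_sum_ite_dvd_mul_sub_le hx2 u Y)

end RamanujanSum

section PartialSummation

lemma sum_Icc_mul_eq_sum_range_mul_sub {R : Type*} [CommRing R] (g h : ℕ → R) (Y : ℕ) :
    ∑ m ∈ Icc 1 Y, g m * h m = (∑ m ∈ Icc 1 Y, g m) * h Y +
      ∑ y ∈ range Y, (∑ m ∈ Icc 1 y, g m) * (h y - h (y + 1)) := by
  induction Y with
  | zero => simp
  | succ Y ih =>
    rw [Finset.sum_Icc_succ_top (by lia), Finset.sum_Icc_succ_top (by lia), ih, sum_range_succ]
    ring

lemma abs_sum_mul_le_of_antitone {g h : ℕ → ℝ} {B : ℝ} (hg : ∀ y, |∑ m ∈ Icc 1 y, g m| ≤ B)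
    (hh : Antitone h) (hh0 : ∀ m, 0 ≤ h m) (Y : ℕ) :
    |∑ m ∈ Icc 1 Y, g m * h m| ≤ B * h 0 := by
  rw [sum_Icc_mul_eq_sum_range_mul_sub]
  calc |(∑ m ∈ Icc 1 Y, g m) * h Y + ∑ y ∈ range Y, (∑ m ∈ Icc 1 y, g m) * (h y - h (y + 1))|
      ≤ |∑ m ∈ Icc 1 Y, g m| * h Y + ∑ y ∈ range Y, |∑ m ∈ Icc 1 y, g m| * (h y - h (y + 1)) := by
        refine (abs_add_le _ _).trans (add_le_add ?_ ?_)
        · rw [abs_mul, abs_of_nonneg (hh0 Y)]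
        · refine (Finset.abs_sum_le_sum_abs _ _).trans_eq (Finset.sum_congr rfl fun y _ => ?_)
          rw [abs_mul, abs_of_nonneg (sub_nonneg.2 (hh y.le_succ))]
    _ ≤ B * h Y + ∑ y ∈ range Y, B * (h y - h (y + 1)) := by
        gcongr with y _
        · exact hh0 Y
        · exact hg Y
        · exact sub_nonneg.2 (hh y.le_succ)
        · exact hg y
    _ = B * h 0 := by
        rw [← Finset.mul_sum, Finset.sum_range_sub']
        ring

end PartialSummation

section DivisorRamanujan

variable {f : ℕ → ℝ} {q : ℕ}

lemma abs_sum_ramanujanSum_mul_sub_le (hf : Antitone f) (hf0 : ∀ n, 0 ≤ f n) (hq : 0 < q)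
    (u Y : ℕ) :
    |∑ m ∈ Icc 1 Y, f (u * m) * ramanujanSum q (u * m) -
      (if q ∣ u then (q.totient : ℝ) else 0) * ∑ m ∈ Icc 1 Y, f (u * m)| ≤ σ 1 q * f 0 := by
  have hbound (y : ℕ) : |∑ m ∈ Icc 1 y,
      ((ramanujanSum q (u * m) : ℝ) - if q ∣ u then (q.totient : ℝ) else 0)| ≤ (σ 1 q : ℕ) := by
    have h := abs_sum_ramanujanSum_sub_le hq u y
    rw [← Int.cast_le (R := ℝ)] at h
    push_cast at h
    rwa [Finset.sum_sub_distrib, sum_const, Nat.card_Icc, Nat.add_sub_cancel, nsmul_eq_mul]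
  have habel := abs_sum_mul_le_of_antitone hbound (h := fun m => f (u * m))
    (fun m n hmn => hf (Nat.mul_le_mul_left u hmn)) (fun m => hf0 _) Y
  simp only [mul_zero, sub_mul, Finset.sum_sub_distrib, ← Finset.mul_sum] at habel
  simpa only [mul_comm (f _)] using habel

/-- Only the term `u = q` of the hyperbola decomposition is kept from the main terms, the others
being nonnegative. -/
lemma totient_mul_sum_sub_le_sum_card_divisors_mul (hf : Antitone f) (hf0 : ∀ n, 0 ≤ f n)
    (hq : 0 < q) {N : ℕ} (hqN : q ≤ N.sqrt) :
    q.totient * ∑ m ∈ Icc 1 (N / q), f (q * m) - 3 * N.sqrt * σ 1 q * f 0 ≤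
      ∑ n ∈ Icc 1 N, (n.divisors.card : ℝ) * (f n * ramanujanSum q n) := by
  set main : ℕ → ℝ := fun u =>
    (if q ∣ u then (q.totient : ℝ) else 0) * ∑ m ∈ Icc 1 (N / u), f (u * m) with hmain
  have hmain0 (u : ℕ) : 0 ≤ main u :=
    mul_nonneg (by split_ifs <;> positivity) (Finset.sum_nonneg fun m _ => hf0 _)
  have hterm (u : ℕ) (hu : u ∈ Icc 1 N.sqrt) : main u - 3 * (σ 1 q * f 0) ≤
      2 * ∑ m ∈ Icc 1 (N / u), f (u * m) * ramanujanSum q (u * m) -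
        ∑ m ∈ Icc 1 N.sqrt, f (u * m) * ramanujanSum q (u * m) := by
    obtain ⟨hu1, huN⟩ := mem_Icc.1 hu
    have hle : N.sqrt ≤ N / u := (Nat.le_div_iff_mul_le hu1).2
      ((Nat.mul_le_mul_left _ huN).trans (Nat.sqrt_le N))
    have hshort : (if q ∣ u then (q.totient : ℝ) else 0) * ∑ m ∈ Icc 1 N.sqrt, f (u * m) ≤
        main u :=
      mul_le_mul_of_nonneg_left (Finset.sum_le_sum_of_subset_of_nonneg (Icc_subset_Icc_right hle)
        fun m _ _ => hf0 _) (by split_ifs <;> positivity)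
    have hlong := abs_le.1 (abs_sum_ramanujanSum_mul_sub_le hf hf0 hq u (N / u))
    have hsqrt := abs_le.1 (abs_sum_ramanujanSum_mul_sub_le hf hf0 hq u N.sqrt)
    linarith [hlong.1, hsqrt.2]
  rw [sum_card_divisors_mul_eq_hyperbola N fun n => f n * ramanujanSum q n]
  calc q.totient * ∑ m ∈ Icc 1 (N / q), f (q * m) - 3 * N.sqrt * σ 1 q * f 0
      = main q - N.sqrt * (3 * (σ 1 q * f 0)) := by
        rw [hmain]
        simp only [dvd_refl, if_true]
        ring
    _ ≤ ∑ u ∈ Icc 1 N.sqrt, main u - N.sqrt * (3 * (σ 1 q * f 0)) := by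
        gcongr
        exact Finset.single_le_sum (fun u _ => hmain0 u) (mem_Icc.2 ⟨hq, hqN⟩)
    _ = ∑ u ∈ Icc 1 N.sqrt, (main u - 3 * (σ 1 q * f 0)) := by
        rw [Finset.sum_sub_distrib, sum_const, Nat.card_Icc, Nat.add_sub_cancel, nsmul_eq_mul]
    _ ≤ _ := Finset.sum_le_sum hterm

lemma totient_div_sub_le_sum_card_divisors_mul_fejerWeight (hq : 0 < q) {N : ℕ}
    (hqN : q ≤ N.sqrt) :
    N / 4 * (q.totient / q : ℝ) - 3 * N.sqrt * σ 1 q ≤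
      ∑ n ∈ Icc 1 N, (n.divisors.card : ℝ) * (fejerWeight (2 * N) n * ramanujanSum q n) := by
  have hqN' : q ≤ N := hqN.trans (Nat.sqrt_le_self N)
  have hfloor : (N / (2 * q) : ℝ) ≤ (N / q : ℕ) := by
    have hdiv : 0 < N / q := Nat.div_pos hqN' hq
    have hlt : N < (N / q + 1) * q := Nat.lt_mul_of_div_lt (Nat.lt_succ_self _) hq
    rw [div_le_iff₀ (by positivity)]
    exact mod_cast (by nlinarith : N ≤ N / q * (2 * q))
  have hsum : (N / (4 * q) : ℝ) ≤ ∑ m ∈ Icc 1 (N / q), fejerWeight (2 * N) (q * m) := by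
    have hhalf := Finset.card_nsmul_le_sum (Icc 1 (N / q)) (fun m => fejerWeight (2 * N) (q * m))
      (1 / 2) fun m hm => one_half_le_fejerWeight (hq.trans_le hqN')
        ((Nat.mul_le_mul_left q (mem_Icc.1 hm).2).trans (Nat.mul_div_le N q))
    rw [Nat.card_Icc, Nat.add_sub_cancel, nsmul_eq_mul] at hhalf
    refine le_trans ?_ hhalf
    calc (N / (4 * q) : ℝ) = N / (2 * q) * (1 / 2) := by ring
      _ ≤ _ := by gcongr
  refine le_trans ?_ (totient_mul_sum_sub_le_sum_card_divisors_mul (antitone_fejerWeight _)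
    (fejerWeight_nonneg _) hq hqN)
  have hzero := mul_le_of_le_one_right (by positivity : (0 : ℝ) ≤ 3 * N.sqrt * σ 1 q)
    (fejerWeight_le_one (2 * N) 0)
  have htot := mul_le_mul_of_nonneg_left hsum (Nat.cast_nonneg (α := ℝ) q.totient)
  calc N / 4 * (q.totient / q : ℝ) - 3 * N.sqrt * σ 1 q
      = q.totient * (N / (4 * q)) - 3 * N.sqrt * σ 1 q := by ring
    _ ≤ _ := sub_le_sub htot hzero

end DivisorRamanujan

section MeanValues

lemma two_mul_le_totient_add_sigma {q : ℕ} (hq : 0 < q) : 2 * q ≤ q.totient + σ 1 q := by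
  have htot := Nat.sum_totient q
  rw [← Nat.cons_self_properDivisors hq.ne', Finset.sum_cons] at htot
  have hle : ∑ d ∈ q.properDivisors, d.totient ≤ ∑ d ∈ q.properDivisors, d :=
    Finset.sum_le_sum fun d _ => d.totient_le
  rw [ArithmeticFunction.sigma_one_apply, Nat.sum_divisors_eq_sum_properDivisors_add_self]
  lia

lemma sum_inv_sq_le (Q : ℕ) : ∑ d ∈ Icc 1 Q, ((d : ℝ) ^ 2)⁻¹ ≤ 5 / 3 := by
  have hpi : Real.pi ^ 2 / 6 ≤ 5 / 3 := by nlinarith [Real.pi_lt_d2, Real.pi_pos]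
  refine le_trans ?_ (hasSum_zeta_two.tsum_eq.trans_le hpi)
  simp only [← one_div]
  exact hasSum_zeta_two.summable.sum_le_tsum _ fun n _ => by positivity

lemma sigma_div_eq_sum_inv {q : ℕ} (hq : 0 < q) :
    (σ 1 q : ℝ) / q = ∑ d ∈ q.divisors, (d : ℝ)⁻¹ := by
  rw [ArithmeticFunction.sigma_one_apply, ← Nat.sum_div_divisors q fun d => d, Nat.cast_sum,
    sum_div]
  refine Finset.sum_congr rfl fun d hd => ?_
  have hd0 : (d : ℝ) ≠ 0 := mod_cast (Nat.pos_of_mem_divisors hd).ne'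
  have hq0 : (q : ℝ) ≠ 0 := mod_cast hq.ne'
  rw [Nat.cast_div (Nat.dvd_of_mem_divisors hd) hd0]
  field_simp

lemma sum_sigma_div_le (Q : ℕ) : ∑ q ∈ Icc 1 Q, (σ 1 q : ℝ) / q ≤ 5 / 3 * Q := by
  calc ∑ q ∈ Icc 1 Q, (σ 1 q : ℝ) / q = ∑ q ∈ Icc 1 Q, ∑ d ∈ q.divisors, (d : ℝ)⁻¹ :=
        Finset.sum_congr rfl fun q hq => sigma_div_eq_sum_inv (mem_Icc.1 hq).1
    _ = ∑ d ∈ Icc 1 Q, ∑ q ∈ Ioc 0 Q with d ∣ q, (d : ℝ)⁻¹ := by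
        refine Finset.sum_comm' fun q d => ?_
        simp only [Nat.mem_divisors, mem_filter, mem_Icc, mem_Ioc]
        constructor
        · rintro ⟨⟨hq, hqQ⟩, hdq, -⟩
          exact ⟨⟨⟨hq, hqQ⟩, hdq⟩, Nat.pos_of_dvd_of_pos hdq hq, (Nat.le_of_dvd hq hdq).trans hqQ⟩
        · rintro ⟨⟨hq, hdq⟩, -⟩
          exact ⟨hq, hdq, hq.1.ne'⟩
    _ = ∑ d ∈ Icc 1 Q, (Q / d : ℕ) * (d : ℝ)⁻¹ := by
        simp only [sum_const, Nat.Ioc_filter_dvd_card_eq_div, nsmul_eq_mul]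
    _ ≤ ∑ d ∈ Icc 1 Q, Q * ((d : ℝ) ^ 2)⁻¹ := by
        refine Finset.sum_le_sum fun d _ => ?_
        calc (Q / d : ℕ) * (d : ℝ)⁻¹ ≤ Q / d * (d : ℝ)⁻¹ := by gcongr; exact Nat.cast_div_le
          _ = Q * ((d : ℝ) ^ 2)⁻¹ := by ring
    _ ≤ 5 / 3 * Q := by
        rw [← Finset.mul_sum, mul_comm]
        gcongr
        exact sum_inv_sq_le Q

lemma sum_sigma_le (Q : ℕ) : ∑ q ∈ Icc 1 Q, (σ 1 q : ℝ) ≤ 5 / 3 * Q ^ 2 := by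
  calc ∑ q ∈ Icc 1 Q, (σ 1 q : ℝ) ≤ ∑ q ∈ Icc 1 Q, Q * ((σ 1 q : ℝ) / q) := by
        refine Finset.sum_le_sum fun q hq => ?_
        obtain ⟨hq1, hqQ⟩ := mem_Icc.1 hq
        have hq0 : (0 : ℝ) < q := mod_cast hq1
        rw [mul_div_assoc', le_div_iff₀ hq0, mul_comm]
        gcongr
    _ ≤ Q * (5 / 3 * Q) := by
        rw [← Finset.mul_sum]
        gcongr
        exact sum_sigma_div_le Q
    _ = 5 / 3 * Q ^ 2 := by ring

lemma div_three_le_sum_totient_div (Q : ℕ) :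
    (Q : ℝ) / 3 ≤ ∑ q ∈ Icc 1 Q, (q.totient : ℝ) / q := by
  have hterm : ∑ q ∈ Icc 1 Q, (2 - (σ 1 q : ℝ) / q) ≤ ∑ q ∈ Icc 1 Q, (q.totient : ℝ) / q := by
    refine Finset.sum_le_sum fun q hq => ?_
    have hq0 : 0 < q := (mem_Icc.1 hq).1
    rw [sub_le_iff_le_add, ← add_div, le_div_iff₀ (by positivity)]
    exact mod_cast two_mul_le_totient_add_sigma hq0
  rw [Finset.sum_sub_distrib, sum_const, Nat.card_Icc, Nat.add_sub_cancel, nsmul_eq_mul] at hterm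
  linarith [sum_sigma_div_le Q]

end MeanValues

section LowerBound

/-- The reduced fractions in `[0, 1)` with denominator at most `Q`, the fraction `a / q` being
recorded as the pair `⟨q, a⟩`. -/
def fareyPairs (Q : ℕ) : Finset (Σ _ : ℕ, ℕ) :=
  (Icc 1 Q).sigma fun q => {a ∈ range q | a.Coprime q}

lemma pairwise_fareyPairs_one_div_sq_le (Q : ℕ) :
    (fareyPairs Q : Set (Σ _ : ℕ, ℕ)).Pairwise fun p r =>
      ∀ k : ℤ, 1 / (Q : ℝ) ^ 2 ≤ |(p.2 : ℝ) / p.1 - r.2 / r.1 - k| := by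
  rintro ⟨b, a⟩ hp ⟨d, c⟩ hr hne k
  simp only [fareyPairs, mem_coe, mem_sigma, mem_filter, mem_range, mem_Icc] at hp hr
  obtain ⟨⟨hb, hbQ⟩, hab, hcop⟩ := hp
  obtain ⟨⟨hd, hdQ⟩, hcd, hcop'⟩ := hr
  set n : ℤ := a * d - c * b - k * (b * d) with hn
  have hn0 : n ≠ 0 := fun h0 => by
    have hab' : (a * d : ℤ) < b * d := by gcongr
    have hcd' : (c * b : ℤ) < b * d := by rw [mul_comm (b : ℤ)]; gcongr
    have ha0 : (0 : ℤ) ≤ a * d := by positivity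
    have hc0 : (0 : ℤ) ≤ c * b := by positivity
    have hk1 : k < 1 := by nlinarith
    have hk2 : -1 < k := by nlinarith
    obtain rfl : k = 0 := by lia
    have hcross : a * d = c * b := by lia
    obtain rfl : b = d := Nat.dvd_antisymm
      (hcop.symm.dvd_of_dvd_mul_left (Dvd.intro_left c hcross.symm))
      (hcop'.symm.dvd_of_dvd_mul_left (Dvd.intro_left a hcross))
    exact hne (by rw [Nat.eq_of_mul_eq_mul_right hb hcross])
  have hfrac : (a : ℝ) / b - c / d - k = n / (b * d) := by
    rw [hn]
    push_cast
    field_simp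
  have hbd : (b * d : ℝ) ≤ Q ^ 2 := by
    rw [sq]
    gcongr
  have hn1 : (1 : ℝ) ≤ |(n : ℝ)| := mod_cast Int.one_le_abs hn0
  rw [hfrac, abs_div, abs_of_pos (by positivity : (0 : ℝ) < b * d)]
  gcongr

lemma sum_card_divisors_mul_fejerWeight_mul_ramanujanSum_le {q : ℕ} (hq : 0 < q) (N : ℕ) :
    ∑ n ∈ Icc 1 N, (n.divisors.card : ℝ) * (fejerWeight (2 * N) n * ramanujanSum q n) ≤
      ∑ a ∈ range q with a.Coprime q, ‖∑ n ∈ Icc 1 N,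
        (n.divisors.card : ℂ) * (fejerWeight (2 * N) n * 𝐞 (n * (a / q)))‖ := by
  have hswap : ((∑ n ∈ Icc 1 N,
      (n.divisors.card : ℝ) * (fejerWeight (2 * N) n * ramanujanSum q n) : ℝ) : ℂ) =
      ∑ a ∈ range q with a.Coprime q, ∑ n ∈ Icc 1 N,
        (n.divisors.card : ℂ) * (fejerWeight (2 * N) n * 𝐞 (n * (a / q))) := by
    rw [Finset.sum_comm]
    simp only [← Finset.mul_sum, sum_fourierChar_coprime hq]
    push_cast
    rfl
  refine (le_abs_self _).trans ?_
  rw [← Real.norm_eq_abs, ← Complex.norm_real, hswap]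
  exact norm_sum_le _ _

lemma mul_le_sum_sum_card_divisors_mul {N Q : ℕ} (hQ : 120 * Q ≤ N.sqrt) :
    (N * Q / 24 : ℝ) ≤ ∑ q ∈ Icc 1 Q, ∑ n ∈ Icc 1 N,
      (n.divisors.card : ℝ) * (fejerWeight (2 * N) n * ramanujanSum q n) := by
  have hX : ((N.sqrt : ℕ) : ℝ) ^ 2 ≤ N := mod_cast Nat.sqrt_le' N
  have hQ' : (120 * Q : ℝ) ≤ N.sqrt := mod_cast hQ
  have herror : 5 * (N.sqrt * (Q : ℝ) ^ 2) ≤ N * Q / 24 := by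
    calc 5 * (N.sqrt * (Q : ℝ) ^ 2) = N.sqrt * (120 * Q) * Q / 24 := by ring
      _ ≤ N.sqrt * N.sqrt * Q / 24 := by gcongr
      _ ≤ N * Q / 24 := by rw [← sq]; gcongr
  calc (N * Q / 24 : ℝ) ≤ N / 4 * (Q / 3) - 3 * N.sqrt * (5 / 3 * Q ^ 2) := by linarith
    _ ≤ N / 4 * ∑ q ∈ Icc 1 Q, (q.totient : ℝ) / q - 3 * N.sqrt * ∑ q ∈ Icc 1 Q, (σ 1 q : ℝ) := by
        gcongr
        · exact div_three_le_sum_totient_div Q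
        · exact sum_sigma_le Q
    _ = ∑ q ∈ Icc 1 Q, (N / 4 * (q.totient / q : ℝ) - 3 * N.sqrt * σ 1 q) := by
        rw [Finset.sum_sub_distrib, Finset.mul_sum, Finset.mul_sum]
    _ ≤ _ := Finset.sum_le_sum fun q hq =>
        totient_div_sub_le_sum_card_divisors_mul_fejerWeight (mem_Icc.1 hq).1
          ((mem_Icc.1 hq).2.trans (by lia))

lemma natCast_le_largeSieveConst_mul_integral {N Q : ℕ} (hQ0 : 0 < Q) (hQ : 120 * Q ≤ N.sqrt) :
    (Q : ℝ) ≤ 48 * largeSieveConst * ∫ t in (0 : ℝ)..1, ‖divisorExpSum N t‖ := by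
  have hN : 0 < N := Nat.sqrt_pos.1 (by lia)
  have hspacing : (fareyPairs Q : Set (Σ _ : ℕ, ℕ)).Pairwise fun p r =>
      ∀ k : ℤ, 1 / ((2 * N : ℕ) : ℝ) ≤ |(p.2 : ℝ) / p.1 - r.2 / r.1 - k| :=
    fun p hp r hr hne k => by
      refine le_trans ?_ (pairwise_fareyPairs_one_div_sq_le Q hp hr hne k)
      gcongr
      exact mod_cast (by nlinarith [Nat.sqrt_le' N] : Q ^ 2 ≤ 2 * N)
  have hmain : (N * Q / 24 : ℝ) ≤
      (2 * N : ℕ) * largeSieveConst * ∫ t in (0 : ℝ)..1, ‖divisorExpSum N t‖ := by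
    calc (N * Q / 24 : ℝ)
        ≤ ∑ q ∈ Icc 1 Q, ∑ a ∈ range q with a.Coprime q, ‖∑ n ∈ Icc 1 N,
          (n.divisors.card : ℂ) * (fejerWeight (2 * N) n * 𝐞 (n * (a / q)))‖ :=
          (mul_le_sum_sum_card_divisors_mul hQ).trans (Finset.sum_le_sum fun q hq =>
            sum_card_divisors_mul_fejerWeight_mul_ramanujanSum_le (mem_Icc.1 hq).1 N)
      _ = ∑ p ∈ fareyPairs Q, ‖∑ n ∈ Icc 1 N,
          (n.divisors.card : ℂ) * (fejerWeight (2 * N) n * 𝐞 (n * (p.2 / p.1)))‖ := by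
          rw [fareyPairs, Finset.sum_sigma]
      _ ≤ _ := sum_norm_fejerMean_le (by lia) hspacing
          (fun n hn => by have := (mem_Icc.1 hn).2; lia) fun n => (n.divisors.card : ℂ)
  push_cast at hmain
  refine le_of_mul_le_mul_left (a := (N : ℝ)) ?_ (mod_cast hN)
  linarith

lemma sqrt_le_largeSieveConst_mul_integral {N : ℕ} (hN : 120 ≤ N.sqrt) :
    (N.sqrt : ℝ) ≤ 11520 * largeSieveConst * ∫ t in (0 : ℝ)..1, ‖divisorExpSum N t‖ := by
  have hQ := natCast_le_largeSieveConst_mul_integral (by lia : 0 < N.sqrt / 120)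
    (Nat.mul_div_le N.sqrt 120)
  have hle : (N.sqrt : ℝ) ≤ 240 * (N.sqrt / 120 : ℕ) :=
    mod_cast (by lia : N.sqrt ≤ 240 * (N.sqrt / 120))
  linarith

end LowerBound

section RealEndpoint

lemma sum_card_divisors_mul_exp_eq_divisorExpSum (N : ℕ) (α : ℝ) :
    ∑ n ∈ Icc 1 N, (n.divisors.card : ℂ) * Complex.exp (2 * Real.pi * Complex.I * (n * α)) =
      divisorExpSum N α := by
  refine Finset.sum_congr rfl fun n _ => ?_
  rw [Real.fourierChar_apply]
  push_cast
  ring_nf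

lemma natCast_sqrt_floor_le_sqrt {x : ℝ} (hx : 0 ≤ x) : (⌊x⌋₊.sqrt : ℝ) ≤ √x :=
  Real.nat_sqrt_le_real_sqrt.trans (Real.sqrt_le_sqrt (Nat.floor_le hx))

lemma sqrt_lt_natCast_sqrt_floor_add_one (x : ℝ) : √x < ⌊x⌋₊.sqrt + 1 := by
  rw [Real.sqrt_lt' (by positivity)]
  exact (Nat.lt_floor_add_one x).trans_le (mod_cast Nat.lt_succ_sqrt' _)

lemma log_floor_add_one_le {x : ℝ} (hx : 2 ≤ x) : Real.log (⌊x⌋₊ + 1) ≤ 2 * Real.log x := by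
  have hfloor := Nat.floor_le (by linarith : 0 ≤ x)
  rw [← Real.log_rpow (by linarith), Real.rpow_two]
  exact Real.log_le_log (by positivity) (by nlinarith)

end RealEndpoint

/-- Main theorem: there exist positive constants `c₁, c₂` and `x₀` such that for
all `x ≥ x₀`, `c₁ √x ≤ ∫₀¹ |∑_{n ≤ x} τ(n) e(nα)| dα ≤ c₂ √x log x`. -/
theorem L1_norm_divisor_exponential_sum :
    ∃ c₁ > 0, ∃ c₂ > 0, ∃ x₀ : ℝ, ∀ x ≥ x₀,
      c₁ * Real.sqrt x ≤
        (∫ α in (0:ℝ)..1,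
          ‖∑ n ∈ Finset.Icc 1 ⌊x⌋₊, (n.divisors.card : ℂ) *
              Complex.exp (2 * Real.pi * Complex.I * (n * α))‖) ∧
      (∫ α in (0:ℝ)..1,
          ‖∑ n ∈ Finset.Icc 1 ⌊x⌋₊, (n.divisors.card : ℂ) *
              Complex.exp (2 * Real.pi * Complex.I * (n * α))‖) ≤
        c₂ * Real.sqrt x * Real.log x := by
  simp only [sum_card_divisors_mul_exp_eq_divisorExpSum]
  have hC := largeSieveConst_pos
  refine ⟨1 / (23040 * largeSieveConst), by positivity, 12, by norm_num, 120 ^ 2, fun x hx => ?_⟩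
  have hx0 : 0 ≤ x := by linarith
  constructor
  · have hX : 120 ≤ ⌊x⌋₊.sqrt := Nat.le_sqrt'.2 (Nat.le_floor (mod_cast hx))
    have hX' : (120 : ℝ) ≤ ⌊x⌋₊.sqrt := mod_cast hX
    have hlower := sqrt_le_largeSieveConst_mul_integral hX
    rw [one_div, inv_mul_le_iff₀ (by positivity)]
    linarith [sqrt_lt_natCast_sqrt_floor_add_one x]
  · calc _ ≤ 6 * ⌊x⌋₊.sqrt * Real.log (⌊x⌋₊ + 1) := integral_norm_divisorExpSum_le _
      _ ≤ 6 * √x * (2 * Real.log x) := by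
        gcongr
        · exact Real.log_nonneg (by linarith [Nat.cast_nonneg (α := ℝ) ⌊x⌋₊])
        · exact natCast_sqrt_floor_le_sqrt hx0
        · exact log_floor_add_one_le (by linarith)
      _ = 12 * √x * Real.log x := by ring
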